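/- Let m, k, ℓ, e be positive integers with k | m, k ≥ 3, e ≡ 2^ℓ (mod 2^k − 1), and gcd(e, 2^m − 1) = 1. Identify F_{2^k} with the subfield {u ∈ F_{2^m} : u^{2^k} = u} of F_{2^m}. Let a : F_{2^k} → F_2⁴ be a map such that every value a(γ) = (a₀, a₁, a₂, a₃) satisfies a₀ + a₁ + a₂ + a₃ = 1 in F_2 (odd Hamming weight), and for each of the eight quadruples q ∈ F_2⁴ of odd Hamming weight, the number of γ ∈ F_{2^k} with a(γ) = q equals 2^{k−3}. Define f : F_{2^m} × F_{2^m} × F_2 × F_2 → F_2 by f(0, y, z₁, z₂) = z₁z₂ and, for x ≠ 0, f(x, y, z₁, z₂) = a(Tr_k^m(y · (x⁻¹)^e))_{(z₁,z₂)}, where the four components of a quadruple are indexed by (z₁, z₂) = (0,0), (0,1), (1,0), (1,1) in positions 0, 1, 2, 3 respectively. Then f is a bent function: for every nonzero (u, v, c₁, c₂) ∈ F_{2^m} × F_{2^m} × F_2 × F_2, the derivative (x,y,z₁,z₂) ↦ f(x+u, y+v, z₁+c₁, z₂+c₂) + f(x,y,z₁,z₂) takes each of the values 0 and 1 exactly 2^{2m+1}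 times. -/

import Mathlib

/-- The relative trace `Tr_k^m : F_{2^m} → F_{2^k}`, with `F_{2^k}` identified with the
subfield `{u : u^{2^k} = u}` of `F_{2^m}`. -/
noncomputable def TrRel (k m : ℕ) (x : GaloisField 2 m) : GaloisField 2 m :=
  ∑ i ∈ Finset.range (m / k), x ^ 2 ^ (k * i)

/-
Write `F = F_{2^m}` and `K = F_{2^k}`. As `y` runs through `F` with `x` fixed, the pair of spread
indices of `(x, y) + (u, v)` and `(x, y)` is equidistributed over `K × K` if `x / u` lies outside
`K`, and over a line of `K × K` otherwise (except that one index is `{0} × F` if `x = 0` or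
`x = -u`). For `u = 0` these lines are the parallels of the diagonal; for `u ≠ 0` they are the lines
through a fixed diagonal point other than the diagonal and the two axis-parallel ones.

The cross-correlation `∑ z, (-1) ^ (b_i (z + c) + b_j z)` of the Boolean functions attached to the
indices `i` and `j` has zero sum over `i ∈ K` and over `j ∈ K` because the assignment is balanced,
and is constant on the diagonal because every `b_i` is bent. Hence it sums to zero over `K × K`,
over each axis-parallel line and over each class of lines above: the lines of `K × K` through a
diagonal point that are not axis-parallel contribute together as much as the diagonal alone.
-/

section Equidistribution

variable {α β M : Type*} [Fintype α] [Fintype β] [AddCommMonoid M]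

lemma sum_comp_of_card_fiber_eq {φ : α → β} {n : ℕ} (hφ : ∀ y, Nat.card {x // φ x = y} = n)
    (g : β → M) : ∑ x, g (φ x) = n • ∑ y, g y := by
  classical
  simp only [← Fintype.sum_fiberwise' φ g, Finset.sum_const, Finset.card_univ,
    ← Nat.card_eq_fintype_card, hφ, Finset.smul_sum]

lemma sum_comp_of_surjective [AddGroup α] [AddGroup β] (φ : α →+ β)
    (hφ : Function.Surjective φ) (g : β → M) :
    ∑ x, g (φ x) = Nat.card φ.ker • ∑ y, g y :=
  sum_comp_of_card_fiber_eq (fun y => Nat.card_congr (φ.fiberEquivKerOfSurjective hφ y)) g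

end Equidistribution

section Bent

/-- A Boolean function on a finite type is balanced if it takes each of the values `0` and `1` on
exactly half of its domain. -/
def IsBalanced {α : Type*} (g : α → ZMod 2) : Prop :=
  ∀ c, 2 * Nat.card {x // g x = c} = Nat.card α

/-- A Boolean function is bent if all its derivatives in nonzero directions are balanced. -/
def IsBent {V : Type*} [AddZeroClass V] (f : V → ZMod 2) : Prop :=
  ∀ a ≠ 0, IsBalanced fun x => f (x + a) + f x

/-- The nontrivial additive character `b ↦ (-1) ^ b` of `ZMod 2`, which turns counting problems for
Boolean functions into integer sums. -/
def signChar : AddChar (ZMod 2) ℤ := AddChar.zmodChar 2 neg_one_sq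

lemma signChar_mul_self (b : ZMod 2) : signChar b * signChar b = 1 := by
  revert b; decide

lemma isBalanced_iff_sum_signChar_eq_zero {α : Type*} [Fintype α] {g : α → ZMod 2} :
    IsBalanced g ↔ ∑ x, signChar (g x) = 0 := by
  have sign_mul_sign : ∀ b c : ZMod 2,
      signChar b * signChar c = 2 * (if b = c then 1 else 0) - 1 := by decide
  have sum_mul_sign (c : ZMod 2) : (∑ x, signChar (g x)) * signChar c =
      2 * Nat.card {x // g x = c} - Nat.card α := by
    simp only [Finset.sum_mul, sign_mul_sign, Finset.sum_sub_distrib, ← Finset.mul_sum,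
      Finset.sum_boole, Finset.sum_const, Finset.card_univ, nsmul_one, Nat.card_eq_fintype_card,
      Fintype.card_subtype]
  constructor
  · intro hg
    have hsum := sum_mul_sign 0
    rw [AddChar.map_zero_eq_one, mul_one] at hsum
    have hcard := hg 0
    lia
  · intro hg c
    have hsum := sum_mul_sign c
    rw [hg, zero_mul] at hsum
    lia

lemma isBent_iff_sum_signChar_eq_zero {V : Type*} [AddZeroClass V] [Fintype V] {f : V → ZMod 2} :
    IsBent f ↔ ∀ a ≠ 0, ∑ x, signChar (f (x + a)) * signChar (f x) = 0 := by
  simp only [IsBent, isBalanced_iff_sum_signChar_eq_zero, AddChar.map_add_eq_mul]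

lemma IsBalanced.comp_of_card_fiber_eq {α β : Type*} [Finite α] [Finite β] {g : β → ZMod 2}
    (hg : IsBalanced g) {φ : α → β} {n : ℕ} (hφ : ∀ y, Nat.card {x // φ x = y} = n) :
    IsBalanced (g ∘ φ) := by
  have := Fintype.ofFinite α
  have := Fintype.ofFinite β
  rw [isBalanced_iff_sum_signChar_eq_zero] at hg ⊢
  calc ∑ x, signChar (g (φ x)) = n • ∑ y, signChar (g y) :=
        sum_comp_of_card_fiber_eq hφ fun y => signChar (g y)
    _ = 0 := by rw [hg, smul_zero]

lemma IsBalanced.comp_equiv {α β : Type*} {g : β → ZMod 2} (hg : IsBalanced g) (σ : α ≃ β) :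
    IsBalanced (g ∘ σ) := fun c => by
  rw [Nat.card_congr σ, ← hg c]
  exact congrArg _ (Nat.card_congr (σ.subtypeEquiv fun _ => Iff.rfl))

lemma IsBent.card_derivative_fiber {V : Type*} [AddZeroClass V] {f : V → ZMod 2} (hf : IsBent f)
    {n : ℕ} (hV : Nat.card V = 2 * n) {a : V} (ha : a ≠ 0) (c : ZMod 2) :
    Nat.card {x // f (x + a) + f x = c} = n :=
  mul_left_cancel₀ two_ne_zero ((hf a ha c).trans hV)

end Bent

section Kernel

variable {K M : Type*} [AddCommMonoid M]

/-- A kernel on the index set `Option K` of a spread whose sums over `K` in either argument vanish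
and which is constant, equal to `A`, on the diagonal. -/
structure IsSpreadKernel [Fintype K] (C : Option K → Option K → M) (A : M) : Prop where
  sum_left (j : Option K) : ∑ i : K, C (some i) j = 0
  sum_right (i : Option K) : ∑ j : K, C i (some j) = 0
  diag (i : Option K) : C i i = A

variable [Field K] [Fintype K]

/-- The sum of a kernel along the line of slope `l` through the diagonal point `(τ, τ)` of the
affine plane `K × K`. -/
def lineSum (C : Option K → Option K → M) (τ l : K) : M :=
  ∑ j : K, C (some (l * j + (1 - l) * τ)) (some j)

variable {C : Option K → Option K → M} {A : M}

lemma IsSpreadKernel.lineSum_zero (hC : IsSpreadKernel C A) (τ : K) : lineSum C τ 0 = 0 := by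
  simp [lineSum, hC.sum_right]

lemma IsSpreadKernel.lineSum_one (hC : IsSpreadKernel C A) (τ : K) :
    lineSum C τ 1 = Fintype.card K • A := by
  simp [lineSum, hC.diag]

lemma IsSpreadKernel.sum_lineSum (hC : IsSpreadKernel C A) (τ : K) :
    ∑ l, lineSum C τ l = Fintype.card K • A := by
  unfold lineSum
  rw [Finset.sum_comm, Fintype.sum_eq_single τ]
  · have (l : K) : l * τ + (1 - l) * τ = τ := by ring
    simp [this, hC.diag]
  · intro j hj
    rw [← hC.sum_left (some j)]
    let horizontal : K ≃ K := (Equiv.mulRight₀ (j - τ) (sub_ne_zero.2 hj)).trans (Equiv.addRight τ)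
    refine Fintype.sum_equiv horizontal _ _ fun l => ?_
    simp only [horizontal, Equiv.trans_apply, Equiv.mulRight₀_apply, Equiv.coe_addRight]
    ring_nf

lemma IsSpreadKernel.sum_parallel (hC : IsSpreadKernel C A) :
    ∑ d : K, ∑ j : K, C (some (j + d)) (some j) = 0 := by
  rw [Finset.sum_comm]
  refine Finset.sum_eq_zero fun j _ => ?_
  rw [← hC.sum_left (some j)]
  exact Equiv.sum_comp (Equiv.addLeft j) fun i => C (some i) (some j)

end Kernel

section Spread

variable {K F : Type*} [Field K] [Field F] [Algebra K F] (T : F →ₗ[K] K) (π : F ≃* F)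

open Classical in
/-- The index of the part of the generalized Desarguesian spread of `F × F` containing a point:
`none` stands for the line `{0} × F`, and `some γ` for the set `A(γ)`. The functional `T` plays the
role of `Tr_k^m` and the multiplicative automorphism `π` that of `x ↦ x ^ e`. -/
noncomputable def spreadIndex (p : F × F) : Option K :=
  if p.1 = 0 then none else some (T (p.2 * (π p.1)⁻¹))

lemma spreadIndex_zero (y : F) : spreadIndex T π (0, y) = none := if_pos rfl

lemma spreadIndex_of_ne_zero {x : F} (hx : x ≠ 0) (y : F) :
    spreadIndex T π (x, y) = some (T (y * (π x)⁻¹)) := if_neg hx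

lemma spreadIndex_mul_mul {u : F} (hu : u ≠ 0) (x y : F) :
    spreadIndex T π (u * x, π u * y) = spreadIndex T π (x, y) := by
  rcases eq_or_ne x 0 with rfl | hx
  · simp only [mul_zero, spreadIndex_zero]
  · have hπu : π u ≠ 0 := (map_ne_zero_iff π π.injective).2 hu
    rw [spreadIndex_of_ne_zero T π (mul_ne_zero hu hx), spreadIndex_of_ne_zero T π hx,
      map_mul π, mul_inv, mul_mul_mul_comm, mul_inv_cancel₀ hπu, one_mul]

variable {T π}

lemma surjective_functional_pair (hT : T ≠ 0) {a b : F} (hab : LinearIndependent K ![a, b]) :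
    Function.Surjective fun y : F => (T (y * a), T (y * b)) := by
  let φ : F →ₗ[K] K × K :=
    (T ∘ₗ LinearMap.mulRight K a).prod (T ∘ₗ LinearMap.mulRight K b)
  change Function.Surjective φ
  rw [← LinearMap.range_eq_top]
  by_contra hrange
  obtain ⟨ψ, hψ, hle⟩ := Submodule.exists_le_ker_of_lt_top _ (lt_top_iff_ne_top.2 hrange)
  have hψ_apply (i j : K) : ψ (i, j) = i * ψ (1, 0) + j * ψ (0, 1) := by
    rw [← smul_eq_mul, ← smul_eq_mul, ← map_smul, ← map_smul, ← map_add]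
    simp
  set c := ψ (1, 0) • a + ψ (0, 1) • b with hc
  have hTc (y : F) : T (y * c) = 0 := by
    have : ψ (φ y) = 0 := hle ⟨y, rfl⟩
    rw [hc, mul_add, mul_smul_comm, mul_smul_comm, map_add, map_smul, map_smul, smul_eq_mul,
      smul_eq_mul, mul_comm, mul_comm (ψ (0, 1)), ← hψ_apply]
    exact this
  have hc0 : c = 0 := by
    by_contra hc0
    exact hT (LinearMap.ext fun y => by simpa [hc0] using hTc (y * c⁻¹))
  obtain ⟨h₁, h₂⟩ := LinearIndependent.pair_iff.1 hab _ _ hc0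
  exact hψ (LinearMap.ext fun p => by rw [← Prod.mk.eta (p := p), hψ_apply, h₁, h₂]; simp)

lemma map_mul_inv_algebraMap (y : F) (c : K) : T (y * (algebraMap K F c)⁻¹) = c⁻¹ * T y := by
  rw [← map_inv₀, mul_comm, ← Algebra.smul_def, map_smul, smul_eq_mul]

variable {ρ : K ≃+* K}

lemma mem_range_algebraMap_of_map (hπ : ∀ κ, π (algebraMap K F κ) = algebraMap K F (ρ κ)) {x : F}
    (hx : π x ∈ Set.range (algebraMap K F)) : x ∈ Set.range (algebraMap K F) := by
  obtain ⟨κ, hκ⟩ := hx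
  refine ⟨ρ.symm κ, π.injective ?_⟩
  rw [hπ, ρ.apply_symm_apply, hκ]

lemma linearIndependent_inv_map_inv_map_sub_one
    (hπ : ∀ κ, π (algebraMap K F κ) = algebraMap K F (ρ κ)) {t : F}
    (ht : t ∉ Set.range (algebraMap K F)) :
    LinearIndependent K ![(π t)⁻¹, (π (t - 1))⁻¹] := by
  have ht0 : t ≠ 0 := by rintro rfl; exact ht ⟨0, map_zero _⟩
  have hπt : π t ≠ 0 := (map_ne_zero_iff π π.injective).2 ht0
  rw [LinearIndependent.pair_iff' (inv_ne_zero hπt)]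
  intro κ hκ
  obtain ⟨μ, hμ⟩ : (t - 1) * t⁻¹ ∈ Set.range (algebraMap K F) := by
    refine mem_range_algebraMap_of_map hπ ⟨κ⁻¹, ?_⟩
    rw [map_mul, map_inv₀, map_inv₀, ← inv_inv (π (t - 1)), ← hκ, Algebra.smul_def, mul_inv,
      inv_inv, mul_inv_cancel_right₀ hπt]
  refine ht ⟨(1 - μ)⁻¹, ?_⟩
  rw [map_inv₀, map_sub, map_one, hμ, sub_mul, mul_inv_cancel₀ ht0, one_mul, sub_sub_cancel,
    inv_inv]

variable [Fintype K] [Fintype F] {M : Type*} [AddCommMonoid M]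
  {C : Option K → Option K → M} {A : M}

lemma sum_comp_functional_mul (hT : T ≠ 0) {b : F} (hb : b ≠ 0) (g : K → M) :
    ∑ y, g (T (y * b)) = Nat.card T.toAddMonoidHom.ker • ∑ i, g i := by
  rw [← sum_comp_of_surjective T.toAddMonoidHom (LinearMap.surjective hT) g]
  exact Equiv.sum_comp (Equiv.mulRight₀ b hb) fun y => g (T y)

lemma sum_comp_functional_sub_mul (hT : T ≠ 0) (v : F) {b : F} (hb : b ≠ 0) (g : K → M) :
    ∑ y, g (T ((y - v) * b)) = Nat.card T.toAddMonoidHom.ker • ∑ i, g i := by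
  rw [← sum_comp_functional_mul hT hb g]
  exact Equiv.sum_comp (Equiv.subRight v) fun y => g (T (y * b))

lemma IsSpreadKernel.sum_spreadIndex_vertical (hC : IsSpreadKernel C A) (hT : T ≠ 0) {v : F}
    (hv : v ≠ 0) :
    ∑ p : F × F, C (spreadIndex T π (p + (0, v))) (spreadIndex T π p) = 0 := by
  set n := Nat.card T.toAddMonoidHom.ker
  let D (d : K) : M := ∑ j : K, C (some (j + d)) (some j)
  have sum_fiber (x : F) :
      ∑ y, C (spreadIndex T π ((x, y) + (0, v))) (spreadIndex T π (x, y)) =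
        n • D (T (v * (π x)⁻¹)) := by
    rcases eq_or_ne x 0 with rfl | hx
    · simp only [Prod.mk_add_mk, add_zero, spreadIndex_zero, map_zero, inv_zero, mul_zero, hC.diag,
        D]
      exact sum_comp_functional_mul hT one_ne_zero fun _ => A
    · have hπx : (π x)⁻¹ ≠ 0 := inv_ne_zero ((map_ne_zero_iff π π.injective).2 hx)
      simp only [Prod.mk_add_mk, add_zero, spreadIndex_of_ne_zero T π hx, add_mul, map_add]
      exact sum_comp_functional_mul hT hπx fun i => C (some (i + T (v * (π x)⁻¹))) (some i)
  have sum_D : ∑ x, D (T (v * (π x)⁻¹)) = n • ∑ d, D d := by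
    rw [← sum_comp_functional_mul hT hv D]
    refine Fintype.sum_equiv (π.toEquiv.trans (Equiv.inv F)) _ _ fun x => ?_
    simp [mul_comm]
  rw [Fintype.sum_prod_type]
  simp only [sum_fiber, ← Finset.smul_sum, sum_D]
  simp only [D, hC.sum_parallel, smul_zero]

lemma IsSpreadKernel.sum_spreadIndex_fiber_of_notMem_range (hC : IsSpreadKernel C A) (hT : T ≠ 0)
    (hπ : ∀ κ, π (algebraMap K F κ) = algebraMap K F (ρ κ)) (v : F) {t : F}
    (ht : t ∉ Set.range (algebraMap K F)) :
    ∑ y, C (spreadIndex T π (t, y)) (spreadIndex T π (t - 1, y - v)) = 0 := by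
  have ht0 : t ≠ 0 := by rintro rfl; exact ht ⟨0, map_zero _⟩
  have ht1 : t - 1 ≠ 0 := fun h => ht ⟨1, by rw [map_one, sub_eq_zero.1 h]⟩
  set a := (π t)⁻¹
  set b := (π (t - 1))⁻¹
  let φ : F →+ K × K :=
    ((T ∘ₗ LinearMap.mulRight K a).prod (T ∘ₗ LinearMap.mulRight K b)).toAddMonoidHom
  have hφ : Function.Surjective φ :=
    surjective_functional_pair hT (linearIndependent_inv_map_inv_map_sub_one hπ ht)
  calc ∑ y, C (spreadIndex T π (t, y)) (spreadIndex T π (t - 1, y - v))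
      = ∑ y, C (some (φ y).1) (some ((φ y).2 - T (v * b))) := by
        simp only [spreadIndex_of_ne_zero T π ht0, spreadIndex_of_ne_zero T π ht1, sub_mul, map_sub]
        rfl
    _ = Nat.card φ.ker • ∑ i : K, ∑ j : K, C (some i) (some (j - T (v * b))) := by
        rw [sum_comp_of_surjective φ hφ fun p => C (some p.1) (some (p.2 - T (v * b))),
          Fintype.sum_prod_type]
    _ = 0 := by
        have (i : K) : ∑ j : K, C (some i) (some (j - T (v * b))) = 0 := by
          rw [← hC.sum_right (some i)]
          exact Equiv.sum_comp (Equiv.subRight (T (v * b))) fun j => C (some i) (some j)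
        simp only [this, Finset.sum_const_zero, smul_zero]

lemma IsSpreadKernel.sum_spreadIndex_fiber_zero (hC : IsSpreadKernel C A) (hT : T ≠ 0) (v : F) :
    ∑ y, C (spreadIndex T π (0, y)) (spreadIndex T π (0 - 1, y - v)) = 0 := by
  have h1 : (0 - 1 : F) ≠ 0 := by simp
  simp only [spreadIndex_zero, spreadIndex_of_ne_zero T π h1]
  have hb : (π (0 - 1))⁻¹ ≠ 0 := inv_ne_zero ((map_ne_zero_iff π π.injective).2 h1)
  rw [sum_comp_functional_sub_mul hT v hb fun j => C none (some j), hC.sum_right, smul_zero]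

lemma IsSpreadKernel.sum_spreadIndex_fiber_algebraMap (hC : IsSpreadKernel C A) (hT : T ≠ 0)
    (hπ : ∀ κ, π (algebraMap K F κ) = algebraMap K F (ρ κ)) (v : F) {κ : K} (hκ : κ ≠ 0) :
    ∑ y, C (spreadIndex T π (algebraMap K F κ, y))
        (spreadIndex T π (algebraMap K F κ - 1, y - v)) =
      Nat.card T.toAddMonoidHom.ker • lineSum C (T v) (1 - (ρ κ)⁻¹) := by
  have hκF : algebraMap K F κ ≠ 0 := (map_ne_zero _).2 hκ
  rcases eq_or_ne κ 1 with rfl | hκ1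
  · simp only [map_one, sub_self, inv_one, spreadIndex_zero, hC.lineSum_zero, smul_zero,
      spreadIndex_of_ne_zero T π (one_ne_zero (α := F))]
    rw [sum_comp_functional_mul hT one_ne_zero fun i => C (some i) none, hC.sum_left, smul_zero]
  have hκ1F : algebraMap K F κ - 1 ≠ 0 := by
    rwa [← map_one (algebraMap K F), ← map_sub, map_ne_zero, sub_ne_zero]
  have hπκ1 : π (algebraMap K F κ - 1) = algebraMap K F (ρ κ - 1) := by
    rw [← map_one (algebraMap K F), ← map_sub, hπ, map_sub, map_one]
  have hρκ : ρ κ ≠ 0 := (map_ne_zero_iff ρ ρ.injective).2 hκ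
  have hρκ1 : ρ κ - 1 ≠ 0 := by
    rwa [← map_one ρ, ← map_sub, map_ne_zero_iff ρ ρ.injective, sub_ne_zero]
  have hb : (algebraMap K F (ρ κ - 1))⁻¹ ≠ 0 := inv_ne_zero ((map_ne_zero _).2 hρκ1)
  have index_eq (y : F) : T (y * (π (algebraMap K F κ))⁻¹) =
      (1 - (ρ κ)⁻¹) * T ((y - v) * (algebraMap K F (ρ κ - 1))⁻¹) +
        (1 - (1 - (ρ κ)⁻¹)) * T v := by
    rw [hπ, map_mul_inv_algebraMap, map_mul_inv_algebraMap, map_sub]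
    field_simp
    ring
  simp only [spreadIndex_of_ne_zero T π hκF, spreadIndex_of_ne_zero T π hκ1F, index_eq, hπκ1]
  exact sum_comp_functional_sub_mul hT v hb fun j =>
    C (some ((1 - (ρ κ)⁻¹) * j + (1 - (1 - (ρ κ)⁻¹)) * T v)) (some j)

-- Since `0⁻¹ = 0`, adding the diagonal at `κ = 0` makes the slopes `1 - (ρ κ)⁻¹` run through `K`.
lemma IsSpreadKernel.sum_spreadIndex_one [IsCancelAdd M] (hC : IsSpreadKernel C A) (hT : T ≠ 0)
    (hπ : ∀ κ, π (algebraMap K F κ) = algebraMap K F (ρ κ)) (v : F) :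
    ∑ p : F × F, C (spreadIndex T π (p + (1, v))) (spreadIndex T π p) = 0 := by
  classical
  set n := Nat.card T.toAddMonoidHom.ker
  let S (t : F) : M := ∑ y, C (spreadIndex T π (t, y)) (spreadIndex T π (t - 1, y - v))
  have sum_eq_sum_S : ∑ p : F × F, C (spreadIndex T π (p + (1, v))) (spreadIndex T π p) =
      ∑ t, S t := by
    rw [← Fintype.sum_prod_type']
    refine Fintype.sum_equiv (Equiv.addRight (1, v)) _ _ fun p => ?_
    simp only [Equiv.coe_addRight, Prod.fst_add, Prod.snd_add, add_sub_cancel_right]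
    rfl
  have sum_S_eq_sum_subfield : ∑ t, S t = ∑ κ : K, S (algebraMap K F κ) :=
    (Fintype.sum_of_injective (algebraMap K F) (algebraMap K F).injective _ S
      (fun t ht => hC.sum_spreadIndex_fiber_of_notMem_range hT hπ v ht) fun _ => rfl).symm
  have S_add_diagonal (κ : K) :
      S (algebraMap K F κ) + (if κ = 0 then n • lineSum C (T v) 1 else 0) =
        n • lineSum C (T v) (1 - (ρ κ)⁻¹) := by
    rcases eq_or_ne κ 0 with rfl | hκ
    · simp only [S, map_zero, hC.sum_spreadIndex_fiber_zero hT v, if_pos, inv_zero, sub_zero,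
        zero_add]
    · rw [if_neg hκ, add_zero]
      exact hC.sum_spreadIndex_fiber_algebraMap hT hπ v hκ
  have sum_slopes : ∑ κ, lineSum C (T v) (1 - (ρ κ)⁻¹) = lineSum C (T v) 1 := by
    rw [hC.lineSum_one, ← hC.sum_lineSum (T v)]
    exact Equiv.sum_comp ((ρ.toEquiv.trans (Equiv.inv K)).trans (Equiv.subLeft 1)) _
  have sum_S_subfield := Fintype.sum_congr _ _ S_add_diagonal
  rw [Finset.sum_add_distrib, Fintype.sum_ite_eq', ← Finset.smul_sum, sum_slopes,
    add_eq_right] at sum_S_subfield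
  rw [sum_eq_sum_S, sum_S_eq_sum_subfield, sum_S_subfield]

lemma IsSpreadKernel.sum_spreadIndex_eq_zero [IsCancelAdd M] (hC : IsSpreadKernel C A) (hT : T ≠ 0)
    (hπ : ∀ κ, π (algebraMap K F κ) = algebraMap K F (ρ κ)) {w : F × F} (hw : w ≠ 0) :
    ∑ p : F × F, C (spreadIndex T π (p + w)) (spreadIndex T π p) = 0 := by
  obtain ⟨u, v⟩ := w
  rcases eq_or_ne u 0 with rfl | hu
  · exact hC.sum_spreadIndex_vertical hT fun hv => hw (by rw [hv, Prod.mk_zero_zero])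
  have hπu : π u ≠ 0 := (map_ne_zero_iff π π.injective).2 hu
  let scale : F × F ≃ F × F := (Equiv.mulLeft₀ u hu).prodCongr (Equiv.mulLeft₀ (π u) hπu)
  have index_scale (p : F × F) : spreadIndex T π (scale p) = spreadIndex T π p :=
    spreadIndex_mul_mul T π hu p.1 p.2
  have scale_add (p : F × F) : scale p + (u, v) = scale (p + (1, (π u)⁻¹ * v)) := by
    simp [scale, mul_add, mul_inv_cancel_left₀ hπu, Prod.ext_iff]
  rw [← hC.sum_spreadIndex_one hT hπ ((π u)⁻¹ * v), ← Equiv.sum_comp scale]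
  simp only [scale_add, index_scale]

end Spread

section Concatenation

/-- The cross-correlation at `c` of the members `b i` and `b j` of a family of Boolean functions. -/
def crossCorrelation {ι Z : Type*} [Add Z] [Fintype Z] (b : ι → Z → ZMod 2) (c : Z) (i j : ι) :
    ℤ :=
  ∑ z, signChar (b i (z + c)) * signChar (b j z)

variable {ι Z : Type*} [AddZeroClass Z] [Fintype Z]

lemma crossCorrelation_self_zero (b : ι → Z → ZMod 2) (i : ι) :
    crossCorrelation b 0 i i = Fintype.card Z := by
  simp [crossCorrelation, signChar_mul_self]

lemma crossCorrelation_self_of_isBent {b : ι → Z → ZMod 2} {i : ι} (hb : IsBent (b i)) {c : Z}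
    (hc : c ≠ 0) : crossCorrelation b c i i = 0 :=
  isBent_iff_sum_signChar_eq_zero.1 hb c hc

lemma isSpreadKernel_crossCorrelation {K : Type*} [Fintype K] {b : Option K → Z → ZMod 2} {c : Z}
    {A : ℤ} (hbal : ∀ z, IsBalanced fun κ : K => b (some κ) z)
    (hdiag : ∀ i, crossCorrelation b c i i = A) :
    IsSpreadKernel (crossCorrelation b c) A where
  sum_left j := by
    have (z : Z) := isBalanced_iff_sum_signChar_eq_zero.1 (hbal z)
    simp only [crossCorrelation]
    rw [Finset.sum_comm]
    simp only [← Finset.sum_mul, this, zero_mul, Finset.sum_const_zero]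
  sum_right i := by
    have (z : Z) := isBalanced_iff_sum_signChar_eq_zero.1 (hbal z)
    simp only [crossCorrelation]
    rw [Finset.sum_comm]
    simp only [← Finset.mul_sum, this, mul_zero, Finset.sum_const_zero]
  diag := hdiag

end Concatenation

theorem isBent_spread_concatenation {K F Z : Type*} [Field K] [Field F] [Finite F] [Algebra K F]
    [AddZeroClass Z] [Finite Z] {T : F →ₗ[K] K} (hT : T ≠ 0) {π : F ≃* F} {ρ : K ≃+* K}
    (hπ : ∀ κ, π (algebraMap K F κ) = algebraMap K F (ρ κ)) {b : Option K → Z → ZMod 2}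
    (hbent : ∀ i, IsBent (b i)) (hbal : ∀ z, IsBalanced fun κ : K => b (some κ) z) :
    IsBent fun p : F × F × Z => b (spreadIndex T π (p.1, p.2.1)) p.2.2 := by
  have := Finite.of_injective _ (FaithfulSMul.algebraMap_injective K F)
  have := Fintype.ofFinite K
  have := Fintype.ofFinite F
  have := Fintype.ofFinite Z
  rw [isBent_iff_sum_signChar_eq_zero]
  rintro ⟨u, v, c⟩ hne
  trans ∑ p : F × F, crossCorrelation b c (spreadIndex T π (p + (u, v))) (spreadIndex T π p)
  · rw [← (Equiv.prodAssoc F F Z).sum_comp, Fintype.sum_prod_type]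
    rfl
  rcases eq_or_ne c 0 with rfl | hc
  · have hC := isSpreadKernel_crossCorrelation hbal (crossCorrelation_self_zero b)
    refine hC.sum_spreadIndex_eq_zero hT hπ fun huv => hne ?_
    rw [Prod.mk_eq_zero] at huv
    rw [huv.1, huv.2, Prod.mk_zero_zero, Prod.mk_zero_zero]
  have hdiag (i) : crossCorrelation b c i i = 0 := crossCorrelation_self_of_isBent (hbent i) hc
  rcases eq_or_ne (u, v) 0 with huv | huv
  · simp only [huv, add_zero, hdiag, Finset.sum_const_zero]
  · exact (isSpreadKernel_crossCorrelation hbal hdiag).sum_spreadIndex_eq_zero hT hπ huv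

section FiniteField

lemma pow_bijective_of_coprime {F : Type*} [Field F] [Finite F] {e : ℕ} (he : e ≠ 0)
    (hcoprime : e.Coprime (Nat.card F - 1)) : Function.Bijective fun x : F => x ^ e := by
  have := Fintype.ofFinite F
  rw [← Finite.injective_iff_bijective]
  intro x y (hxy : x ^ e = y ^ e)
  rcases eq_or_ne y 0 with rfl | hy
  · rwa [zero_pow he, pow_eq_zero_iff he] at hxy
  have hquot : (x / y) ^ e = 1 := by rw [div_pow, hxy, div_self (pow_ne_zero e hy)]
  have hquot_ne : x / y ≠ 0 := fun h => by simp [h, he] at hquot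
  have hcard : (x / y) ^ (Nat.card F - 1) = 1 := by
    rw [Nat.card_eq_fintype_card, FiniteField.pow_card_sub_one_eq_one _ hquot_ne]
  rw [← div_eq_one_iff_eq hy, ← pow_one (x / y), ← hcoprime, pow_gcd_eq_one]
  exact ⟨hquot, hcard⟩

lemma pow_eq_pow_of_modEq_card_sub_one {K : Type*} [Field K] [Finite K] {e e' : ℕ} (he : e ≠ 0)
    (he' : e' ≠ 0) (h : e ≡ e' [MOD Nat.card K - 1]) (x : K) : x ^ e = x ^ e' := by
  have := Fintype.ofFinite K
  rcases eq_or_ne x 0 with rfl | hx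
  · rw [zero_pow he, zero_pow he']
  · refine pow_eq_pow_of_modEq h ?_
    rw [Nat.card_eq_fintype_card, FiniteField.pow_card_sub_one_eq_one x hx]

lemma mem_range_algebraMap_iff_pow_card_eq {K F : Type*} [Field K] [Finite K] [Field F]
    [Algebra K F] {x : F} : x ∈ Set.range (algebraMap K F) ↔ x ^ Nat.card K = x := by
  constructor
  · rintro ⟨κ, rfl⟩
    have := Fintype.ofFinite K
    rw [← map_pow, Nat.card_eq_fintype_card, FiniteField.pow_card]
  · intro hx
    exact Polynomial.splits_X_pow_nat_card_sub_X.mem_range_of_isRoot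
      (FiniteField.X_pow_card_sub_X_ne_zero K Finite.one_lt_card) (by simp [hx])

lemma exists_mulEquiv_eq_pow_of_modEq_of_coprime {K F : Type*} [Field K] [Field F] [Finite F]
    [Algebra K F] (p : ℕ) [Fact p.Prime] [CharP K p] {ℓ e : ℕ} (he : e ≠ 0)
    (hmod : e ≡ p ^ ℓ [MOD Nat.card K - 1]) (hcoprime : e.Coprime (Nat.card F - 1)) :
    ∃ (π : F ≃* F) (ρ : K ≃+* K), (∀ x, π x = x ^ e) ∧
      ∀ κ, π (algebraMap K F κ) = algebraMap K F (ρ κ) := by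
  have := Finite.of_injective _ (FaithfulSMul.algebraMap_injective K F)
  refine ⟨MulEquiv.ofBijective (powMonoidHom e) (pow_bijective_of_coprime he hcoprime),
    iterateFrobeniusEquiv K p ℓ, fun x => rfl, fun κ => ?_⟩
  change algebraMap K F κ ^ e = algebraMap K F (κ ^ p ^ ℓ)
  rw [← map_pow, pow_eq_pow_of_modEq_card_sub_one he (pow_ne_zero ℓ (NeZero.ne p)) hmod]

lemma nonempty_algebra_galoisField (p : ℕ) [Fact p.Prime] {k m : ℕ} (hk : k ≠ 0) (hm : m ≠ 0)
    (hkm : k ∣ m) : Nonempty (Algebra (GaloisField p k) (GaloisField p m)) := by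
  obtain ⟨ι⟩ := FiniteField.nonempty_algHom_of_finrank_dvd (F := ZMod p) (K := GaloisField p k)
    (L := GaloisField p m) (by rwa [GaloisField.finrank p hk, GaloisField.finrank p hm])
  exact ⟨ι.toRingHom.toAlgebra⟩

lemma finrank_galoisField (p : ℕ) [Fact p.Prime] {k m : ℕ}
    [Algebra (GaloisField p k) (GaloisField p m)] (hk : k ≠ 0) (hm : m ≠ 0) :
    Module.finrank (GaloisField p k) (GaloisField p m) = m / k := by
  have h := Module.natCard_eq_pow_finrank (K := GaloisField p k) (V := GaloisField p m)
  rw [GaloisField.card p m hm, GaloisField.card p k hk, ← pow_mul] at h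
  exact (Nat.div_eq_of_eq_mul_right (Nat.pos_of_ne_zero hk)
    (Nat.pow_right_injective (Fact.out : p.Prime).two_le h)).symm

lemma mem_range_algebraMap_galoisField_iff {p : ℕ} [Fact p.Prime] {k m : ℕ}
    [Algebra (GaloisField p k) (GaloisField p m)] (hk : k ≠ 0) (γ : GaloisField p m) :
    γ ∈ Set.range (algebraMap (GaloisField p k) (GaloisField p m)) ↔ γ ^ p ^ k = γ := by
  rw [mem_range_algebraMap_iff_pow_card_eq, GaloisField.card p k hk]

lemma algebraMap_trace_eq_TrRel {k m : ℕ} [Algebra (GaloisField 2 k) (GaloisField 2 m)]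
    (hk : k ≠ 0) (hm : m ≠ 0) (x : GaloisField 2 m) :
    algebraMap (GaloisField 2 k) (GaloisField 2 m)
      (Algebra.trace (GaloisField 2 k) (GaloisField 2 m) x) = TrRel k m x := by
  rw [FiniteField.algebraMap_trace_eq_sum_pow, finrank_galoisField 2 hk hm,
    GaloisField.card 2 k hk, TrRel]
  simp only [pow_mul]

lemma card_galoisField_prod_bits {m : ℕ} (hm : m ≠ 0) :
    Nat.card (GaloisField 2 m × GaloisField 2 m × ZMod 2 × ZMod 2) = 2 * 2 ^ (2 * m + 1) := by
  simp only [Nat.card_prod, GaloisField.card 2 m hm, Nat.card_zmod]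
  ring

end FiniteField

section OddWeight

/-- A quadruple of bits, indexed by the points of `F_2 × F_2`, has odd Hamming weight. -/
def IsOddWeight (q : ZMod 2 → ZMod 2 → ZMod 2) : Prop :=
  q 0 0 + q 0 1 + q 1 0 + q 1 1 = 1

instance : DecidablePred IsOddWeight := fun _ => inferInstanceAs (Decidable (_ = _))

lemma IsOddWeight.isBent {q : ZMod 2 → ZMod 2 → ZMod 2} (hq : IsOddWeight q) :
    IsBent fun z : ZMod 2 × ZMod 2 => q z.1 z.2 := by
  rw [isBent_iff_sum_signChar_eq_zero]
  revert q
  decide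

lemma isBent_mul : IsBent fun z : ZMod 2 × ZMod 2 => z.1 * z.2 :=
  IsOddWeight.isBent (q := fun z₁ z₂ => z₁ * z₂) (by decide)

lemma isBalanced_coordinate_oddWeight (z₁ z₂ : ZMod 2) :
    IsBalanced fun q : {q // IsOddWeight q} => q.1 z₁ z₂ := by
  rw [isBalanced_iff_sum_signChar_eq_zero]
  revert z₁ z₂
  decide

lemma isBalanced_coordinate_of_card_fiber_eq {α : Type*} [Finite α] {P : α → Prop}
    {a : α → ZMod 2 → ZMod 2 → ZMod 2} (hodd : ∀ γ, P γ → IsOddWeight (a γ)) {n : ℕ}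
    (hcount : ∀ q, IsOddWeight q → Nat.card {γ // P γ ∧ ∀ z₁ z₂, a γ z₁ z₂ = q z₁ z₂} = n)
    (z₁ z₂ : ZMod 2) : IsBalanced fun γ : {γ // P γ} => a γ z₁ z₂ := by
  let φ (γ : {γ // P γ}) : {q // IsOddWeight q} := ⟨a γ, hodd γ γ.2⟩
  refine (isBalanced_coordinate_oddWeight z₁ z₂).comp_of_card_fiber_eq (φ := φ) (n := n) fun q => ?_
  simp only [φ, Subtype.ext_iff, funext_iff, ← hcount q.1 q.2]
  exact Nat.card_congr (Equiv.subtypeSubtypeEquivSubtypeInter P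
    fun γ => ∀ z₁ z₂, a γ z₁ z₂ = q.1 z₁ z₂)

end OddWeight

theorem gPSap_partition_concatenation_is_bent_general {Z : Type*} [AddZeroClass Z] [Finite Z]
    (m k ℓ e : ℕ) (hm : 0 < m) (he : 0 < e) (hkm : k ∣ m) (hmod : e ≡ 2 ^ ℓ [MOD 2 ^ k - 1])
    (hgcd : Nat.gcd e (2 ^ m - 1) = 1) (a : GaloisField 2 m → Z → ZMod 2)
    (hbent : ∀ γ : GaloisField 2 m, γ ^ 2 ^ k = γ → IsBent (a γ))
    (hbal : ∀ z, IsBalanced fun γ : {γ : GaloisField 2 m // γ ^ 2 ^ k = γ} => a γ z)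
    (b : Z → ZMod 2) (hb : IsBent b) (f : GaloisField 2 m × GaloisField 2 m × Z → ZMod 2)
    (hf0 : ∀ (y : GaloisField 2 m) (z : Z), f (0, y, z) = b z)
    (hf : ∀ (x y : GaloisField 2 m) (z : Z), x ≠ 0 →
      f (x, y, z) = a (TrRel k m (y * (x⁻¹) ^ e)) z) :
    IsBent f := by
  have hm₀ : m ≠ 0 := hm.ne'
  have hk₀ : k ≠ 0 := ne_zero_of_dvd_ne_zero hm₀ hkm
  obtain ⟨_⟩ := nonempty_algebra_galoisField 2 hk₀ hm₀ hkm
  let K := GaloisField 2 k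
  let F := GaloisField 2 m
  obtain ⟨π, ρ, hπ, hπρ⟩ : ∃ (π : F ≃* F) (ρ : K ≃+* K), (∀ x, π x = x ^ e) ∧
      ∀ κ, π (algebraMap K F κ) = algebraMap K F (ρ κ) :=
    exists_mulEquiv_eq_pow_of_modEq_of_coprime 2 he.ne'
      (by rwa [GaloisField.card 2 k hk₀]) (by rwa [GaloisField.card 2 m hm₀])
  have mem_subfield := mem_range_algebraMap_galoisField_iff (p := 2) (m := m) hk₀
  let subfieldEquiv : K ≃ {γ : F // γ ^ 2 ^ k = γ} :=
    (Equiv.ofInjective _ (algebraMap K F).injective).trans (Equiv.subtypeEquivRight mem_subfield)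
  let q (i : Option K) : Z → ZMod 2 := i.elim b fun κ => a (algebraMap K F κ)
  have hq_bent : ∀ i, IsBent (q i)
    | none => hb
    | some κ => hbent _ ((mem_subfield _).1 ⟨κ, rfl⟩)
  have hq_bal (z : Z) : IsBalanced fun κ : K => q (some κ) z := (hbal z).comp_equiv subfieldEquiv
  have hfq : f = fun p => q (spreadIndex (Algebra.trace K F) π (p.1, p.2.1)) p.2.2 := by
    ext ⟨x, y, z⟩
    rcases eq_or_ne x 0 with rfl | hx
    · rw [hf0, spreadIndex_zero]
      rfl
    · rw [hf x y z hx, spreadIndex_of_ne_zero _ _ hx, ← algebraMap_trace_eq_TrRel hk₀ hm₀, hπ,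
        inv_pow]
      rfl
  rw [hfq]
  exact isBent_spread_concatenation (Algebra.trace_ne_zero K F) hπρ hq_bent hq_bal

/-- Theorem 5.3: assigning to each odd-weight quadruple exactly `2^{k-3}` spread sets
`A(γ)` of the generalized Desarguesian spread and defining `f` to be constant on each
part `A(γ) × {(z₁,z₂)}` accordingly (with `f = z₁z₂` on `U × {(z₁,z₂)}`) yields a bent
function. Here `a γ z₁ z₂` is the component of the quadruple assigned to `γ ∈ F_{2^k}`
indexed by `(z₁, z₂)`. -/
theorem gPSap_partition_concatenation_is_bent
    (m k ℓ e : ℕ) (hm : 0 < m) (hk : 3 ≤ k) (hℓ : 0 < ℓ) (he : 0 < e)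
    (hkm : k ∣ m) (hmod : e ≡ 2 ^ ℓ [MOD 2 ^ k - 1])
    (hgcd : Nat.gcd e (2 ^ m - 1) = 1)
    (a : GaloisField 2 m → ZMod 2 → ZMod 2 → ZMod 2)
    (hodd : ∀ γ : GaloisField 2 m, γ ^ 2 ^ k = γ →
      a γ 0 0 + a γ 0 1 + a γ 1 0 + a γ 1 1 = 1)
    (hcount : ∀ q : ZMod 2 → ZMod 2 → ZMod 2,
      q 0 0 + q 0 1 + q 1 0 + q 1 1 = 1 →
      Nat.card {γ : GaloisField 2 m //
        γ ^ 2 ^ k = γ ∧ ∀ z₁ z₂ : ZMod 2, a γ z₁ z₂ = q z₁ z₂} = 2 ^ (k - 3))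
    (f : GaloisField 2 m × GaloisField 2 m × ZMod 2 × ZMod 2 → ZMod 2)
    (hf0 : ∀ (y : GaloisField 2 m) (z₁ z₂ : ZMod 2), f (0, y, z₁, z₂) = z₁ * z₂)
    (hf : ∀ (x y : GaloisField 2 m) (z₁ z₂ : ZMod 2), x ≠ 0 →
      f (x, y, z₁, z₂) = a (TrRel k m (y * (x⁻¹) ^ e)) z₁ z₂) :
    ∀ (u v : GaloisField 2 m) (c₁ c₂ : ZMod 2),
      (u, v, c₁, c₂) ≠ ((0, 0, 0, 0) :
        GaloisField 2 m × GaloisField 2 m × ZMod 2 × ZMod 2) →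
      ∀ c : ZMod 2,
        Nat.card {p : GaloisField 2 m × GaloisField 2 m × ZMod 2 × ZMod 2 //
          f (p.1 + u, p.2.1 + v, p.2.2.1 + c₁, p.2.2.2 + c₂) + f p = c} =
        2 ^ (2 * m + 1) := by
  intro u v c₁ c₂ hne c
  have hbent (γ) (hγ : γ ^ 2 ^ k = γ) : IsBent fun z : ZMod 2 × ZMod 2 => a γ z.1 z.2 :=
    IsOddWeight.isBent (hodd γ hγ)
  have hbal := isBalanced_coordinate_of_card_fiber_eq hodd hcount
  have hf_bent := gPSap_partition_concatenation_is_bent_general m k ℓ e hm he hkm hmod hgcd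
    (fun γ z => a γ z.1 z.2) hbent (fun z => hbal z.1 z.2) _ isBent_mul f
    (fun y z => hf0 y z.1 z.2) fun x y z => hf x y z.1 z.2
  exact hf_bent.card_derivative_fiber (card_galoisField_prod_bits hm.ne') hne c
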